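/- Let $B_1, B_2$ be centered Gaussian random vectors in $\mathbb{R}^n$ (values $B_k(t_1),\dots,B_k(t_n)$) such that $E[(B_1(t_i)-B_1(t_j))^2] \ge E[(B_2(t_i)-B_2(t_j))^2]$ for all $i \ne j$. Then $E[\max_{1\le i\le n} B_1(t_i)] \ge E[\max_{1\le i\le n} B_2(t_i)]$. -/

import Mathlib

open MeasureTheory ProbabilityTheory
open scoped NNReal

/-!
Replace `X` and `Y` by independent copies and rotate `X` into `Y` along
`Z_θ = cos θ • X + sin θ • Y`. Gaussian integration by parts expresses the derivative in `θ` of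
`E[F(Z_θ)]` as `sin θ * cos θ` times the expectation of the Hessian of `F` at `Z_θ` paired with
`Cov Y - Cov X`. For `F = logSumExp` with Gibbs weights `p`, that pairing is
`1/2 * ∑ i j, p_i p_j (Var(Y_i - Y_j) - Var(X_i - X_j)) ≤ 0`, so `E[F]` decreases from `X` to `Y`.
The error `log n` made on replacing the maximum by `logSumExp` becomes negligible when both vectors
are multiplied by a large constant.
-/

section Lipschitz

variable {Ω E F : Type*} [MeasurableSpace Ω] [NormedAddCommGroup E] [NormedAddCommGroup F]

lemma memLp_comp_of_lipschitzWith {P : Measure Ω} [IsFiniteMeasure P] {p : ENNReal} {X : Ω → E}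
    (hX : MemLp X p P) {K : ℝ≥0} {f : E → F} (hf : LipschitzWith K f) :
    MemLp (fun ω ↦ f (X ω)) p P := by
  have hf₀ : LipschitzWith K (fun x ↦ f x - f 0) := by
    simpa using hf.sub (LipschitzWith.const (f 0))
  simpa [Function.comp_def, Pi.add_def] using
    (hf₀.comp_memLp (sub_self _) hX).add (memLp_const (f 0))

lemma integrable_fderiv_apply_of_lipschitzWith {P : Measure Ω} [IsFiniteMeasure P]
    [NormedSpace ℝ E] [MeasurableSpace E] [BorelSpace E] {V : Ω → E}
    (hV : AEMeasurable V P) {g : E → ℝ} {K : ℝ≥0} (hg : LipschitzWith K g) (d : E) :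
    Integrable (fun ω ↦ fderiv ℝ g (V ω) d) P :=
  .of_bound (((measurable_fderiv_apply_const ℝ g d).comp_aemeasurable hV).aestronglyMeasurable)
    (K * ‖d‖) (.of_forall fun _ ↦ ContinuousLinearMap.le_of_opNorm_le _
      (norm_fderiv_le_of_lipschitz ℝ hg) d)

end Lipschitz

section Covariance

variable {Ω : Type*} [MeasurableSpace Ω] {P : Measure Ω} {U : Ω → ℝ}

lemma integral_comp_prodMk_of_indepFun {α β : Type*} [MeasurableSpace α] [MeasurableSpace β]
    [IsFiniteMeasure P] {X : Ω → α} {Y : Ω → β} (hX : AEMeasurable X P) (hY : AEMeasurable Y P)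
    (hXY : IndepFun X Y P) {f : α × β → ℝ}
    (hf : AEStronglyMeasurable f (P.map fun ω ↦ (X ω, Y ω)))
    (hf_int : Integrable (fun ω ↦ f (X ω, Y ω)) P) :
    ∫ ω, f (X ω, Y ω) ∂P = ∫ y, ∫ x, f (x, y) ∂(P.map X) ∂(P.map Y) := by
  have hlaw := (indepFun_iff_map_prod_eq_prod_map_map hX hY).1 hXY
  have hf_prod := (integrable_map_measure hf (hX.prodMk hY)).2 hf_int
  rw [← integral_map (hX.prodMk hY) hf, hlaw, integral_prod_symm _ (hlaw ▸ hf_prod)]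

lemma covariance_eq_integral_sub_mul [IsProbabilityMeasure P] {V : Ω → ℝ} (hU : MemLp U 2 P)
    (hV : MemLp V 2 P) :
    cov[U, V; P] = ∫ ω, (U ω - ∫ ω', U ω' ∂P) * V ω ∂P := by
  have hU_int := hU.integrable one_le_two
  have hU_centered : MemLp (fun ω ↦ U ω - ∫ ω', U ω' ∂P) 2 P := hU.sub (memLp_const _)
  rw [← covariance_sub_const_left hU_int (∫ ω, U ω ∂P), covariance_eq_sub hU_centered hV,
    integral_sub hU_int (integrable_const _)]
  simp

lemma covariance_eq_zero_of_variance_eq_zero [IsFiniteMeasure P] {V : Ω → ℝ} (hU : MemLp U 2 P)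
    (hvar : Var[U; P] = 0) : cov[U, V; P] = 0 := by
  refine integral_eq_zero_of_ae ?_
  filter_upwards [ae_eq_integral_of_variance_eq_zero hU hvar] with ω hω
  simp [← hω]

end Covariance

section Stein

lemma hasDerivAt_gaussianPDFReal (m : ℝ) (v : ℝ≥0) (x : ℝ) :
    HasDerivAt (gaussianPDFReal m v) (-((x - m) / v) * gaussianPDFReal m v x) x := by
  have hexponent : HasDerivAt (fun x ↦ -(x - m) ^ 2 / (2 * v)) (-((x - m) / v)) x := by
    convert! ((((hasDerivAt_id x).sub_const m).pow 2).neg).div_const (2 * (v : ℝ)) using 1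
    simp only [id_eq, Nat.cast_ofNat, Nat.add_one_sub_one, pow_one, mul_one]
    ring
  convert! hexponent.exp.const_mul (√(2 * Real.pi * v))⁻¹ using 1
  rw [gaussianPDFReal]
  ring

lemma integrable_gaussianReal_iff {m : ℝ} {v : ℝ≥0} (hv : v ≠ 0) {f : ℝ → ℝ} :
    Integrable f (gaussianReal m v) ↔ Integrable (fun x ↦ gaussianPDFReal m v x * f x) := by
  rw [gaussianReal_of_var_ne_zero _ hv,
    integrable_withDensity_iff_integrable_smul' (by fun_prop) (by simp [gaussianPDF])]
  simp [toReal_gaussianPDF]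

theorem integral_sub_mul_gaussianReal {m : ℝ} {v : ℝ≥0} {f : ℝ → ℝ} {K : ℝ≥0}
    (hf : LipschitzWith K f) (hf' : Differentiable ℝ f) :
    ∫ x, (x - m) * f x ∂gaussianReal m v = v * ∫ x, deriv f x ∂gaussianReal m v := by
  rcases eq_or_ne v 0 with rfl | hv
  · simp
  have hid : MemLp (fun x : ℝ ↦ x) 2 (gaussianReal m v) := memLp_id_gaussianReal 2
  have hf_memLp : MemLp f 2 (gaussianReal m v) := memLp_comp_of_lipschitzWith hid hf
  have hf_int := hf_memLp.integrable one_le_two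
  have hxf_int : Integrable (fun x ↦ (x - m) * f x) (gaussianReal m v) :=
    (hid.sub (memLp_const m)).integrable_mul hf_memLp
  have hderiv_int : Integrable (deriv f) (gaussianReal m v) :=
    .of_bound (measurable_deriv f).aestronglyMeasurable K
      (.of_forall fun x ↦ norm_deriv_le_of_lipschitz hf)
  rw [integrable_gaussianReal_iff hv] at hf_int hxf_int hderiv_int
  have hscore (x : ℝ) : f x * (-((x - m) / v) * gaussianPDFReal m v x)
      = (-v : ℝ)⁻¹ * (gaussianPDFReal m v x * ((x - m) * f x)) := by
    rw [inv_neg]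
    ring
  have hparts := integral_mul_deriv_eq_deriv_mul_of_integrable
    (fun x _ ↦ (hf' x).hasDerivAt) (fun x _ ↦ hasDerivAt_gaussianPDFReal m v x)
    ((hxf_int.const_mul _).congr (.of_forall fun x ↦ (hscore x).symm))
    (hderiv_int.congr (.of_forall fun x ↦ mul_comm _ _))
    (hf_int.congr (.of_forall fun x ↦ mul_comm _ _))
  simp only [hscore, integral_const_mul] at hparts
  simp only [integral_gaussianReal_eq_integral_smul hv, smul_eq_mul]
  field_simp at hparts
  simpa [mul_comm, mul_left_comm, mul_assoc] using hparts

variable {Ω E : Type*} [MeasurableSpace Ω] {P : Measure Ω} [NormedAddCommGroup E] [NormedSpace ℝ E]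
  [MeasurableSpace E] [BorelSpace E] [SecondCountableTopology E] {U : Ω → ℝ}

lemma indepFun_sub_smul_of_covariance [CompleteSpace E] {V : Ω → E} {d : E}
    (hUV : HasGaussianLaw (fun ω ↦ (U ω, V ω)) P)
    (hd : ∀ L : StrongDual ℝ E, cov[U, fun ω ↦ L (V ω); P] = Var[U; P] * L d) :
    IndepFun U (fun ω ↦ V ω - U ω • d) P := by
  have hP := hUV.isProbabilityMeasure
  have hU := hUV.fst.memLp_two
  have hresidual : HasGaussianLaw (fun ω ↦ (U ω, V ω - U ω • d)) P :=
    hUV.map_fun ((ContinuousLinearMap.fst ℝ ℝ E).prod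
      (.snd ℝ ℝ E - (ContinuousLinearMap.fst ℝ ℝ E).smulRight d))
  refine hresidual.indepFun_of_covariance_strongDual fun L₁ L₂ ↦ ?_
  have hL₁ : L₁ ∘ U = fun ω ↦ L₁ 1 * U ω := by
    ext ω
    simpa [mul_comm] using L₁.map_smul (U ω) 1
  have hL₂ : (L₂ ∘ fun ω ↦ V ω - U ω • d) = fun ω ↦ L₂ (V ω) - L₂ d * U ω := by
    ext ω
    simp [mul_comm]
  rw [hL₁, hL₂, covariance_const_mul_left,
    covariance_fun_sub_right hU (hUV.snd.map_fun L₂).memLp_two (hU.const_mul _),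
    covariance_const_mul_right, covariance_self hU.aemeasurable, hd]
  ring

theorem covariance_comp_add_smul_of_indepFun {W : Ω → E} (d : E) (hU : HasGaussianLaw U P)
    (hW : MemLp W 2 P) (hUW : IndepFun U W P) {g : E → ℝ} {K : ℝ≥0} (hg : LipschitzWith K g)
    (hg' : Differentiable ℝ g) :
    cov[U, fun ω ↦ g (W ω + U ω • d); P]
      = Var[U; P] * ∫ ω, fderiv ℝ g (W ω + U ω • d) d ∂P := by
  have hP := hU.isProbabilityMeasure
  have hU₂ := hU.memLp_two
  have hV : MemLp (fun ω ↦ W ω + U ω • d) 2 P :=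
    hW.add ((ContinuousLinearMap.toSpanSingleton ℝ d).comp_memLp' hU₂)
  have hgV := memLp_comp_of_lipschitzWith hV hg
  have hline (w : E) : LipschitzWith (K * ‖d‖₊) fun u : ℝ ↦ g (w + u • d) :=
    hg.comp (.of_dist_le_mul fun s t ↦ by
      simp [dist_eq_norm, ← sub_smul, norm_smul, mul_comm])
  have hline' (w : E) (u : ℝ) :
      HasDerivAt (fun u : ℝ ↦ g (w + u • d)) (fderiv ℝ g (w + u • d) d) u :=
    (hg' _).hasFDerivAt.comp_hasDerivAt u
      (by simpa using ((hasDerivAt_id u).smul_const d).const_add w)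
  have hstein (w : E) := integral_sub_mul_gaussianReal (m := ∫ ω, U ω ∂P)
    (v := Var[U; P].toNNReal) (hline w) fun u ↦ (hline' w u).differentiableAt
  simp only [fun w u ↦ (hline' w u).deriv, ← hU.map_eq_gaussianReal,
    Real.coe_toNNReal _ (variance_nonneg U P)] at hstein
  have hg_cont := hg.continuous
  rw [covariance_eq_integral_sub_mul hU₂ hgV,
    integral_comp_prodMk_of_indepFun (f := fun p ↦ (p.1 - ∫ ω, U ω ∂P) * g (p.2 + p.1 • d))
      hU.aemeasurable hW.aemeasurable hUW
      (Continuous.aestronglyMeasurable (by fun_prop))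
      ((hU₂.sub (memLp_const _)).integrable_mul hgV),
    integral_comp_prodMk_of_indepFun (f := fun p ↦ fderiv ℝ g (p.2 + p.1 • d) d)
      hU.aemeasurable hW.aemeasurable hUW
      (((measurable_fderiv_apply_const ℝ g d).comp (by fun_prop)).aestronglyMeasurable)
      (integrable_fderiv_apply_of_lipschitzWith hV.aemeasurable hg d),
    ← integral_const_mul]
  simp only [hstein]

theorem covariance_comp_eq_integral_fderiv [CompleteSpace E] {V : Ω → E} {c : E}
    (hUV : HasGaussianLaw (fun ω ↦ (U ω, V ω)) P)
    (hc : ∀ L : StrongDual ℝ E, cov[U, fun ω ↦ L (V ω); P] = L c)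
    {g : E → ℝ} {K : ℝ≥0} (hg : LipschitzWith K g) (hg' : Differentiable ℝ g) :
    cov[U, fun ω ↦ g (V ω); P] = ∫ ω, fderiv ℝ g (V ω) c ∂P := by
  have hP := hUV.isProbabilityMeasure
  obtain ⟨d, rfl⟩ : ∃ d, Var[U; P] • d = c := by
    rcases eq_or_ne Var[U; P] 0 with hvar | hvar
    · have hc₀ : c = 0 := SeparatingDual.eq_zero_of_forall_dual_eq_zero (R := ℝ) fun L ↦
        (hc L).symm.trans (covariance_eq_zero_of_variance_eq_zero hUV.fst.memLp_two hvar)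
      exact ⟨0, by simp [hc₀]⟩
    · exact ⟨(Var[U; P])⁻¹ • c, smul_inv_smul₀ hvar c⟩
  have hU := hUV.fst
  have hindep := indepFun_sub_smul_of_covariance hUV (by simpa using hc)
  have hW : MemLp (fun ω ↦ V ω - U ω • d) 2 P :=
    hUV.snd.memLp_two.sub ((ContinuousLinearMap.toSpanSingleton ℝ d).comp_memLp' hU.memLp_two)
  simpa [integral_const_mul] using covariance_comp_add_smul_of_indepFun d hU hW hindep hg hg'

end Stein

section Pi

variable {Ω ι : Type*} [MeasurableSpace Ω] [Fintype ι] {P : Measure Ω}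

lemma exists_strongDual_pi_apply_eq_sum_mul (L : StrongDual ℝ (ι → ℝ)) :
    ∃ a : ι → ℝ, ∀ x, L x = ∑ i, a i * x i := by
  classical
  exact ⟨_, fun x ↦ by
    simpa only [smul_eq_mul, mul_comm] using! L.toLinearMap.pi_apply_eq_sum_univ x⟩

theorem covariance_comp_eq_integral_fderiv_pi {U : Ω → ℝ} {V : Ω → ι → ℝ}
    (hUV : HasGaussianLaw (fun ω ↦ (U ω, V ω)) P)
    {g : (ι → ℝ) → ℝ} {K : ℝ≥0} (hg : LipschitzWith K g) (hg' : Differentiable ℝ g) :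
    cov[U, fun ω ↦ g (V ω); P] =
      ∫ ω, fderiv ℝ g (V ω) (fun i ↦ cov[U, fun ω ↦ V ω i; P]) ∂P := by
  have hP := hUV.isProbabilityMeasure
  refine covariance_comp_eq_integral_fderiv hUV (fun L ↦ ?_) hg hg'
  obtain ⟨a, ha⟩ := exists_strongDual_pi_apply_eq_sum_mul L
  simp only [ha]
  rw [covariance_fun_sum_right (fun i ↦ (hUV.snd.eval i).memLp_two.const_mul _) hUV.fst.memLp_two]
  simp only [covariance_const_mul_right]

end Pi

section Interpolation

/-- The rotation `cos θ • X + sin θ • Y`, which runs from `X` at `θ = 0` to `Y` at `θ = π / 2`. Its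
velocity in `θ` is the same rotation at `θ + π / 2`. -/
noncomputable def gaussianInterp {Ω E : Type*} [AddCommGroup E] [Module ℝ E] (X Y : Ω → E) (θ : ℝ)
    (ω : Ω) : E :=
  Real.cos θ • X ω + Real.sin θ • Y ω

section Normed

variable {Ω E : Type*} [NormedAddCommGroup E] [NormedSpace ℝ E]

lemma norm_gaussianInterp_le (X Y : Ω → E) (θ : ℝ) (ω : Ω) :
    ‖gaussianInterp X Y θ ω‖ ≤ ‖X ω‖ + ‖Y ω‖ := by
  refine (norm_add_le _ _).trans (add_le_add ?_ ?_) <;> rw [norm_smul]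
  · exact mul_le_of_le_one_left (norm_nonneg _) (Real.abs_cos_le_one θ)
  · exact mul_le_of_le_one_left (norm_nonneg _) (Real.abs_sin_le_one θ)

lemma hasDerivAt_gaussianInterp (X Y : Ω → E) (θ : ℝ) (ω : Ω) :
    HasDerivAt (fun θ ↦ gaussianInterp X Y θ ω) (gaussianInterp X Y (θ + Real.pi / 2) ω) θ := by
  simpa [gaussianInterp, Real.cos_add_pi_div_two, Real.sin_add_pi_div_two] using
    ((Real.hasDerivAt_cos θ).smul_const (X ω)).fun_add ((Real.hasDerivAt_sin θ).smul_const (Y ω))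

variable [MeasurableSpace Ω] {P : Measure Ω} {X Y : Ω → E}

lemma memLp_gaussianInterp {p : ENNReal} (hX : MemLp X p P) (hY : MemLp Y p P) (θ : ℝ) :
    MemLp (gaussianInterp X Y θ) p P :=
  (hX.const_smul (Real.cos θ)).add (hY.const_smul (Real.sin θ))

lemma hasDerivAt_integral_comp_gaussianInterp [IsFiniteMeasure P] (hX : Integrable X P)
    (hY : Integrable Y P) {F : E → ℝ} {K : ℝ≥0} (hF : LipschitzWith K F) (hF' : ContDiff ℝ 1 F)
    (θ : ℝ) :
    HasDerivAt (fun θ ↦ ∫ ω, F (gaussianInterp X Y θ ω) ∂P)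
      (∫ ω, fderiv ℝ F (gaussianInterp X Y θ ω) (gaussianInterp X Y (θ + Real.pi / 2) ω) ∂P) θ := by
  rw [← memLp_one_iff_integrable] at hX hY
  have hinterp (θ : ℝ) := memLp_gaussianInterp hX hY θ
  have hcomp (θ : ℝ) := memLp_comp_of_lipschitzWith (hinterp θ) hF
  have hfderiv : Continuous fun p : E × E ↦ fderiv ℝ F p.1 p.2 :=
    ((hF'.continuous_fderiv one_ne_zero).comp continuous_fst).clm_apply continuous_snd
  refine (hasDerivAt_integral_of_dominated_loc_of_deriv_le Filter.univ_mem
    (.of_forall fun θ ↦ (hcomp θ).aestronglyMeasurable) ((hcomp θ).integrable le_rfl)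
    (hfderiv.comp_aestronglyMeasurable
      ((hinterp θ).aestronglyMeasurable.prodMk (hinterp (θ + Real.pi / 2)).aestronglyMeasurable))
    (.of_forall fun ω θ _ ↦ ?_)
    (((hX.integrable le_rfl).norm.add (hY.integrable le_rfl).norm).const_mul (K : ℝ))
    (.of_forall fun ω θ _ ↦ (hF'.differentiable one_ne_zero _).hasFDerivAt.comp_hasDerivAt θ
      (hasDerivAt_gaussianInterp X Y θ ω))).2
  refine (ContinuousLinearMap.le_of_opNorm_le _ (norm_fderiv_le_of_lipschitz ℝ hF) _).trans ?_
  exact mul_le_mul_of_nonneg_left (norm_gaussianInterp_le X Y _ ω) K.2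

end Normed

section Pi

variable {Ω ι : Type*} [MeasurableSpace Ω] {P : Measure Ω} {X Y : Ω → ι → ℝ}

lemma hasGaussianLaw_eval_gaussianInterp_prodMk [Finite ι]
    (hXY : HasGaussianLaw (fun ω ↦ (X ω, Y ω)) P) (φ θ : ℝ) (i : ι) :
    HasGaussianLaw (fun ω ↦ (gaussianInterp X Y φ ω i, gaussianInterp X Y θ ω)) P := by
  have := Fintype.ofFinite ι
  let rotation (θ : ℝ) : (ι → ℝ) × (ι → ℝ) →L[ℝ] ι → ℝ :=
    Real.cos θ • .fst ℝ _ _ + Real.sin θ • .snd ℝ _ _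
  simpa [rotation, gaussianInterp] using
    hXY.map_fun (((ContinuousLinearMap.proj i).comp (rotation φ)).prod (rotation θ))

variable [Fintype ι]

lemma covariance_gaussianInterp [IsFiniteMeasure P] (hX : MemLp X 2 P) (hY : MemLp Y 2 P)
    (hXY : IndepFun X Y P) (φ θ : ℝ) (i j : ι) :
    cov[fun ω ↦ gaussianInterp X Y φ ω i, fun ω ↦ gaussianInterp X Y θ ω j; P] =
      Real.cos φ * Real.cos θ * cov[fun ω ↦ X ω i, fun ω ↦ X ω j; P] +
      Real.sin φ * Real.sin θ * cov[fun ω ↦ Y ω i, fun ω ↦ Y ω j; P] := by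
  have hXi (i : ι) (c : ℝ) : MemLp (c • fun ω ↦ X ω i) 2 P := (hX.eval i).const_smul c
  have hYi (i : ι) (c : ℝ) : MemLp (c • fun ω ↦ Y ω i) 2 P := (hY.eval i).const_smul c
  have hcross (i j : ι) : cov[fun ω ↦ X ω i, fun ω ↦ Y ω j; P] = 0 :=
    (hXY.comp (measurable_pi_apply i) (measurable_pi_apply j)).covariance_eq_zero
      (hX.eval i) (hY.eval j)
  have hcoord (θ : ℝ) (i : ι) : (fun ω ↦ gaussianInterp X Y θ ω i) =
      Real.cos θ • (fun ω ↦ X ω i) + Real.sin θ • fun ω ↦ Y ω i := rfl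
  rw [hcoord, hcoord, covariance_add_left (hXi _ _) (hYi _ _) ((hXi _ _).add (hYi _ _)),
    covariance_add_right (hXi _ _) (hXi _ _) (hYi _ _),
    covariance_add_right (hYi _ _) (hXi _ _) (hYi _ _)]
  simp only [covariance_smul_left, covariance_smul_right, hcross,
    covariance_comm (fun ω ↦ Y ω i) fun ω ↦ X ω j]
  ring

lemma covariance_gaussianInterp_add_pi_div_two_comp (hX : HasGaussianLaw X P)
    (hY : HasGaussianLaw Y P) (hXY : IndepFun X Y P) {g : (ι → ℝ) → ℝ} {K : ℝ≥0}
    (hg : LipschitzWith K g) (hg' : Differentiable ℝ g) (i : ι) (θ : ℝ) :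
    cov[fun ω ↦ gaussianInterp X Y (θ + Real.pi / 2) ω i, fun ω ↦ g (gaussianInterp X Y θ ω); P] =
      Real.sin θ * Real.cos θ * ∫ ω, fderiv ℝ g (gaussianInterp X Y θ ω) (fun j ↦
        cov[fun ω ↦ Y ω i, fun ω ↦ Y ω j; P] - cov[fun ω ↦ X ω i, fun ω ↦ X ω j; P]) ∂P := by
  have hP := hX.isProbabilityMeasure
  have hXY_law := hXY.hasGaussianLaw hX hY
  have hcov : (fun j ↦ cov[fun ω ↦ gaussianInterp X Y (θ + Real.pi / 2) ω i,
        fun ω ↦ gaussianInterp X Y θ ω j; P]) = (Real.sin θ * Real.cos θ) • fun j ↦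
      cov[fun ω ↦ Y ω i, fun ω ↦ Y ω j; P] - cov[fun ω ↦ X ω i, fun ω ↦ X ω j; P] := by
    ext j
    simp only [covariance_gaussianInterp hX.memLp_two hY.memLp_two hXY, Real.cos_add_pi_div_two,
      Real.sin_add_pi_div_two, Pi.smul_apply, smul_eq_mul]
    ring
  rw [covariance_comp_eq_integral_fderiv_pi
    (hasGaussianLaw_eval_gaussianInterp_prodMk hXY_law _ θ i) hg hg', hcov]
  simp only [map_smul, smul_eq_mul, integral_const_mul]

end Pi

end Interpolation

section GaussianLaw

lemma hasGaussianLaw_sub_const {Ω E : Type*} [MeasurableSpace Ω] {P : Measure Ω}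
    [NormedAddCommGroup E] [NormedSpace ℝ E] [MeasurableSpace E] [BorelSpace E]
    {X : Ω → E} (hX : HasGaussianLaw X P) (c : E) :
    HasGaussianLaw (fun ω ↦ X ω - c) P where
  isGaussian_map := by
    have hX_law := hX.isGaussian_map
    rw [← Function.comp_def (· - c) X, ← AEMeasurable.map_map_of_aemeasurable
      (by fun_prop) hX.aemeasurable]
    infer_instance

lemma hasGaussianLaw_comp_of_measurePreserving {Ω Ω' E : Type*} [MeasurableSpace Ω]
    [MeasurableSpace Ω'] {P : Measure Ω} {P' : Measure Ω'} [TopologicalSpace E] [AddCommMonoid E]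
    [Module ℝ E] [MeasurableSpace E] {X : Ω → E} (hX : HasGaussianLaw X P) {f : Ω' → Ω}
    (hf : MeasurePreserving f P' P) : HasGaussianLaw (fun ω ↦ X (f ω)) P' where
  isGaussian_map := by
    rw [← Function.comp_def, ← AEMeasurable.map_map_of_aemeasurable
      (hf.map_eq ▸ hX.aemeasurable) hf.aemeasurable, hf.map_eq]
    exact hX.isGaussian_map

lemma hasGaussianLaw_of_map_sum_mul_eq {Ω ι : Type*} [MeasurableSpace Ω] [Fintype ι]
    {P : Measure Ω} {X : Ω → ι → ℝ} (hX : AEMeasurable X P)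
    (h : ∀ a : ι → ℝ, ∃ m v, P.map (fun ω ↦ ∑ i, a i * X ω i) = gaussianReal m v) :
    HasGaussianLaw X P where
  isGaussian_map := isGaussian_of_map_eq_gaussianReal fun L ↦ by
    obtain ⟨a, ha⟩ := exists_strongDual_pi_apply_eq_sum_mul L
    rw [AEMeasurable.map_map_of_aemeasurable (by fun_prop) hX]
    simpa only [Function.comp_def, ha] using h a

lemma integral_eval_eq_zero {Ω ι : Type*} [MeasurableSpace Ω] [Fintype ι]
    {P : Measure Ω} {X : Ω → ι → ℝ} (hX : AEMeasurable X P)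
    (h : ∀ a : ι → ℝ, ∃ v, P.map (fun ω ↦ ∑ i, a i * X ω i) = gaussianReal 0 v) (i : ι) :
    ∫ ω, X ω i ∂P = 0 := by
  classical
  obtain ⟨v, hv⟩ := h (Pi.single i 1)
  have hlaw : P.map (fun ω ↦ X ω i) = gaussianReal 0 v := by
    simpa [Pi.single_apply] using hv
  rw [← integral_map (f := fun x : ℝ ↦ x) (hX.eval i) (by fun_prop), hlaw,
    integral_id_gaussianReal]

end GaussianLaw

section Comparison

variable {Ω ι : Type*} [MeasurableSpace Ω] [Fintype ι] {P : Measure Ω} {X Y : Ω → ι → ℝ}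
  {F : (ι → ℝ) → ℝ} {G : ι → (ι → ℝ) → ℝ} {K K' : ℝ≥0}

lemma hasDerivAt_integral_comp_gaussianInterp_of_hasGaussianLaw (hX : HasGaussianLaw X P)
    (hY : HasGaussianLaw Y P) (hXY : IndepFun X Y P)
    (hX₀ : ∀ i, ∫ ω, X ω i ∂P = 0) (hY₀ : ∀ i, ∫ ω, Y ω i ∂P = 0)
    (hF : LipschitzWith K F)
    (hFG : ∀ x, HasFDerivAt F (∑ i, G i x • ContinuousLinearMap.proj (R := ℝ) i) x)
    (hG : ∀ i, LipschitzWith K' (G i)) (hG' : ∀ i, Differentiable ℝ (G i)) (θ : ℝ) :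
    HasDerivAt (fun θ ↦ ∫ ω, F (gaussianInterp X Y θ ω) ∂P)
      (Real.sin θ * Real.cos θ * ∫ ω, ∑ i, fderiv ℝ (G i) (gaussianInterp X Y θ ω) (fun j ↦
        cov[fun ω ↦ Y ω i, fun ω ↦ Y ω j; P] - cov[fun ω ↦ X ω i, fun ω ↦ X ω j; P]) ∂P) θ := by
  have hP := hX.isProbabilityMeasure
  have hG_cont (i : ι) := (hG i).continuous
  have hF' : ContDiff ℝ 1 F := contDiff_one_iff_hasFDerivAt.2 ⟨_, by fun_prop, hFG⟩
  have hinterp (θ : ℝ) := memLp_gaussianInterp hX.memLp_two hY.memLp_two θ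
  have hvelocity₀ (i : ι) : ∫ ω, gaussianInterp X Y (θ + Real.pi / 2) ω i ∂P = 0 := by
    simp only [gaussianInterp, Pi.add_apply, Pi.smul_apply, smul_eq_mul]
    rw [integral_add ((hX.integrable.eval i).const_mul _) ((hY.integrable.eval i).const_mul _)]
    simp only [integral_const_mul, hX₀, hY₀, mul_zero, add_zero]
  have hcov (i : ι) :
      ∫ ω, G i (gaussianInterp X Y θ ω) * gaussianInterp X Y (θ + Real.pi / 2) ω i ∂P =
        cov[fun ω ↦ gaussianInterp X Y (θ + Real.pi / 2) ω i,
          fun ω ↦ G i (gaussianInterp X Y θ ω); P] := by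
    rw [covariance_eq_integral_sub_mul ((hinterp _).eval i)
      (memLp_comp_of_lipschitzWith (hinterp θ) (hG i)), hvelocity₀]
    simp only [sub_zero, mul_comm]
  convert! hasDerivAt_integral_comp_gaussianInterp hX.integrable hY.integrable hF hF' θ using 1
  simp only [(hFG _).fderiv, sum_apply, smul_apply, ContinuousLinearMap.proj_apply, smul_eq_mul]
  rw [integral_finsetSum, integral_finsetSum]
  · simp only [hcov, covariance_gaussianInterp_add_pi_div_two_comp hX hY hXY (hG _) (hG' _),
      Finset.mul_sum]
  · exact fun i _ ↦
      (memLp_comp_of_lipschitzWith (hinterp θ) (hG i)).integrable_mul ((hinterp _).eval i)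
  · exact fun i _ ↦ integrable_fderiv_apply_of_lipschitzWith
      (hinterp θ).aestronglyMeasurable.aemeasurable (hG i) _

lemma integral_comp_le_of_indepFun_of_integral_eq_zero (hX : HasGaussianLaw X P)
    (hY : HasGaussianLaw Y P) (hXY : IndepFun X Y P)
    (hX₀ : ∀ i, ∫ ω, X ω i ∂P = 0) (hY₀ : ∀ i, ∫ ω, Y ω i ∂P = 0)
    (hF : LipschitzWith K F)
    (hFG : ∀ x, HasFDerivAt F (∑ i, G i x • ContinuousLinearMap.proj (R := ℝ) i) x)
    (hG : ∀ i, LipschitzWith K' (G i)) (hG' : ∀ i, Differentiable ℝ (G i))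
    (hcov : ∀ x, ∑ i, fderiv ℝ (G i) x (fun j ↦
      cov[fun ω ↦ Y ω i, fun ω ↦ Y ω j; P] - cov[fun ω ↦ X ω i, fun ω ↦ X ω j; P]) ≤ 0) :
    ∫ ω, F (Y ω) ∂P ≤ ∫ ω, F (X ω) ∂P := by
  have hderiv := hasDerivAt_integral_comp_gaussianInterp_of_hasGaussianLaw hX hY hXY hX₀ hY₀ hF hFG
    hG hG'
  have hanti : AntitoneOn (fun θ ↦ ∫ ω, F (gaussianInterp X Y θ ω) ∂P)
      (Set.Icc 0 (Real.pi / 2)) := by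
    refine antitoneOn_of_deriv_nonpos (convex_Icc _ _)
      (fun θ _ ↦ (hderiv θ).continuousAt.continuousWithinAt)
      (fun θ _ ↦ (hderiv θ).differentiableAt.differentiableWithinAt) fun θ hθ ↦ ?_
    obtain ⟨hθ₀, hθ₁⟩ := interior_subset hθ
    rw [(hderiv θ).deriv]
    exact mul_nonpos_of_nonneg_of_nonpos
      (mul_nonneg (Real.sin_nonneg_of_nonneg_of_le_pi hθ₀ (by linarith [Real.pi_pos]))
        (Real.cos_nonneg_of_neg_pi_div_two_le_of_le (by linarith [Real.pi_pos]) hθ₁))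
      (integral_nonpos fun ω ↦ hcov _)
  simpa [gaussianInterp] using hanti (Set.left_mem_Icc.2 Real.pi_div_two_pos.le)
    (Set.right_mem_Icc.2 Real.pi_div_two_pos.le) Real.pi_div_two_pos.le

theorem integral_comp_le_of_indepFun (hX : HasGaussianLaw X P) (hY : HasGaussianLaw Y P)
    (hXY : IndepFun X Y P) (hmean : ∀ i, ∫ ω, X ω i ∂P = ∫ ω, Y ω i ∂P)
    (hF : LipschitzWith K F)
    (hFG : ∀ x, HasFDerivAt F (∑ i, G i x • ContinuousLinearMap.proj (R := ℝ) i) x)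
    (hG : ∀ i, LipschitzWith K' (G i)) (hG' : ∀ i, Differentiable ℝ (G i))
    (hcov : ∀ x, ∑ i, fderiv ℝ (G i) x (fun j ↦
      cov[fun ω ↦ Y ω i, fun ω ↦ Y ω j; P] - cov[fun ω ↦ X ω i, fun ω ↦ X ω j; P]) ≤ 0) :
    ∫ ω, F (Y ω) ∂P ≤ ∫ ω, F (X ω) ∂P := by
  have hP := hX.isProbabilityMeasure
  set m : ι → ℝ := fun i ↦ ∫ ω, X ω i ∂P with hm
  have hX_int (i : ι) := hX.integrable.eval i
  have hY_int (i : ι) := hY.integrable.eval i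
  have htranslate : LipschitzWith 1 fun x ↦ x + m := (isometry_add_right m).lipschitz
  simpa using integral_comp_le_of_indepFun_of_integral_eq_zero (F := fun x ↦ F (x + m))
    (G := fun i x ↦ G i (x + m)) (K := K * 1) (K' := K' * 1)
    (hasGaussianLaw_sub_const hX m) (hasGaussianLaw_sub_const hY m)
    (hXY.comp (measurable_id.sub_const m) (measurable_id.sub_const m))
    (fun i ↦ by simp [integral_sub (hX_int i) (integrable_const _), hm])
    (fun i ↦ by simp [integral_sub (hY_int i) (integrable_const _), hm, hmean])
    (hF.comp htranslate) (fun x ↦ (hasFDerivAt_comp_add_right m).2 (hFG (x + m)))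
    (fun i ↦ (hG i).comp htranslate) (fun i ↦ (hG' i).comp (by fun_prop)) fun x ↦ by
      simpa [fderiv_comp_add_right, covariance_sub_const_left, covariance_sub_const_right, hX_int,
        hY_int] using hcov (x + m)

end Comparison

section LogSumExp

variable {ι : Type*} [Fintype ι]

/-- The smooth maximum `log ∑ exp xᵢ`, which exceeds the maximum of `x` by at most the logarithm of
the number of coordinates. -/
noncomputable def logSumExp (x : ι → ℝ) : ℝ := Real.log (∑ i, Real.exp (x i))

/-- The Gibbs weights `exp xᵢ / ∑ exp xⱼ`: the partial derivatives of `logSumExp` at `x`. -/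
noncomputable def softmax (x : ι → ℝ) (i : ι) : ℝ := Real.exp (x i) / ∑ j, Real.exp (x j)

/-- Averaging against the Gibbs weights `softmax x`, as a continuous linear functional: the
derivative of `logSumExp` at `x`. -/
noncomputable def softmaxMean (x : ι → ℝ) : StrongDual ℝ (ι → ℝ) :=
  ∑ i, softmax x i • ContinuousLinearMap.proj i

lemma softmax_nonneg (x : ι → ℝ) (i : ι) : 0 ≤ softmax x i := by
  unfold softmax
  positivity

lemma softmaxMean_apply (x h : ι → ℝ) : softmaxMean x h = ∑ i, softmax x i * h i := by
  simp [softmaxMean]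

lemma sum_exp_pos [Nonempty ι] (x : ι → ℝ) : 0 < ∑ i, Real.exp (x i) :=
  Finset.sum_pos (fun i _ ↦ Real.exp_pos (x i)) Finset.univ_nonempty

lemma exp_logSumExp [Nonempty ι] (x : ι → ℝ) : Real.exp (logSumExp x) = ∑ i, Real.exp (x i) :=
  Real.exp_log (sum_exp_pos x)

lemma softmax_eq_exp_sub [Nonempty ι] (x : ι → ℝ) (i : ι) :
    softmax x i = Real.exp (x i - logSumExp x) := by
  rw [softmax, Real.exp_sub, exp_logSumExp]

lemma sum_softmax [Nonempty ι] (x : ι → ℝ) : ∑ i, softmax x i = 1 := by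
  simp only [softmax, ← Finset.sum_div, div_self (sum_exp_pos x).ne']

lemma softmax_le_one [Nonempty ι] (x : ι → ℝ) (i : ι) : softmax x i ≤ 1 :=
  sum_softmax x ▸ Finset.single_le_sum (fun i _ ↦ softmax_nonneg x i) (Finset.mem_univ i)

lemma norm_softmaxMean_le_one [Nonempty ι] (x : ι → ℝ) : ‖softmaxMean x‖ ≤ 1 := by
  refine ContinuousLinearMap.opNorm_le_bound _ zero_le_one fun h ↦ ?_
  calc ‖softmaxMean x h‖ ≤ ∑ i, softmax x i * ‖h‖ := by
        rw [softmaxMean_apply]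
        refine norm_sum_le_of_le _ fun i _ ↦ ?_
        rw [norm_mul, Real.norm_of_nonneg (softmax_nonneg x i)]
        exact mul_le_mul_of_nonneg_left (norm_le_pi_norm h i) (softmax_nonneg x i)
    _ = 1 * ‖h‖ := by rw [← Finset.sum_mul, sum_softmax]

lemma hasFDerivAt_logSumExp [Nonempty ι] (x : ι → ℝ) :
    HasFDerivAt logSumExp (softmaxMean x) x := by
  have hsum : HasFDerivAt (fun x : ι → ℝ ↦ ∑ i, Real.exp (x i))
      (∑ i, Real.exp (x i) • ContinuousLinearMap.proj (R := ℝ) i) x :=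
    .fun_sum fun i _ ↦ (hasFDerivAt_apply i x).exp
  convert! hsum.log (sum_exp_pos x).ne' using 1
  simp only [softmaxMean, softmax, Finset.smul_sum, smul_smul, div_eq_inv_mul]

lemma lipschitzWith_logSumExp [Nonempty ι] : LipschitzWith 1 (logSumExp : (ι → ℝ) → ℝ) :=
  lipschitzWith_of_nnnorm_fderiv_le (𝕜 := ℝ)
    (fun x ↦ (hasFDerivAt_logSumExp x).differentiableAt) fun x ↦ by
      rw [(hasFDerivAt_logSumExp x).fderiv]
      exact norm_softmaxMean_le_one x

lemma hasFDerivAt_softmax [Nonempty ι] (i : ι) (x : ι → ℝ) :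
    HasFDerivAt (fun x ↦ softmax x i)
      (softmax x i • (ContinuousLinearMap.proj i - softmaxMean x)) x := by
  simp only [softmax_eq_exp_sub]
  exact ((hasFDerivAt_apply i x).sub (hasFDerivAt_logSumExp x)).exp

lemma lipschitzWith_softmax [Nonempty ι] (i : ι) : LipschitzWith 2 fun x ↦ softmax x i := by
  refine lipschitzWith_of_nnnorm_fderiv_le (𝕜 := ℝ)
    (fun x ↦ (hasFDerivAt_softmax i x).differentiableAt) fun x ↦ ?_
  have hproj : ‖ContinuousLinearMap.proj (R := ℝ) (φ := fun _ : ι ↦ ℝ) i‖ ≤ 1 :=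
    ContinuousLinearMap.opNorm_le_bound _ zero_le_one fun h ↦ by
      simpa using norm_le_pi_norm h i
  have hdiff := norm_sub_le_of_le hproj (norm_softmaxMean_le_one x)
  rw [(hasFDerivAt_softmax i x).fderiv, ← NNReal.coe_le_coe, coe_nnnorm, norm_smul,
    Real.norm_of_nonneg (softmax_nonneg x i)]
  calc softmax x i * ‖ContinuousLinearMap.proj i - softmaxMean x‖ ≤ 1 * (1 + 1) :=
        mul_le_mul (softmax_le_one x i) hdiff (norm_nonneg _) zero_le_one
    _ = ((2 : ℝ≥0) : ℝ) := by norm_num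

lemma lipschitzWith_iSup [Nonempty ι] : LipschitzWith 1 fun x : ι → ℝ ↦ ⨆ i, x i :=
  .of_le_add fun x y ↦ ciSup_le fun i ↦ by
    have hxy : x i - y i ≤ dist x y := (le_abs_self _).trans (dist_le_pi_dist x y i)
    have hy := le_ciSup (Finite.bddAbove_range y) i
    linarith

lemma iSup_le_logSumExp [Nonempty ι] (x : ι → ℝ) : ⨆ i, x i ≤ logSumExp x :=
  ciSup_le fun i ↦ (Real.le_log_iff_exp_le (sum_exp_pos x)).2 <|
    Finset.single_le_sum (fun i _ ↦ (Real.exp_pos (x i)).le) (Finset.mem_univ i)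

lemma logSumExp_le_iSup_add [Nonempty ι] (x : ι → ℝ) :
    logSumExp x ≤ (⨆ i, x i) + Real.log (Fintype.card ι) := by
  rw [logSumExp, Real.log_le_iff_le_exp (sum_exp_pos x), Real.exp_add, Real.exp_log (by positivity),
    mul_comm, ← nsmul_eq_mul]
  exact Finset.sum_le_card_nsmul _ _ _ fun i _ ↦
    Real.exp_le_exp.2 (le_ciSup (Finite.bddAbove_range x) i)

lemma two_mul_sum_mul_sub_sum_mul {p : ι → ℝ} (hp : ∑ i, p i = 1) (D : ι → ι → ℝ) :
    2 * ∑ i, p i * (D i i - ∑ j, p j * D i j) =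
      ∑ i, ∑ j, p i * p j * (D i i + D j j - D i j - D j i) := by
  have hdiag : ∑ i, ∑ j, p i * p j * D i i = ∑ i, p i * D i i := by
    simp only [← Finset.sum_mul, ← Finset.mul_sum, hp, mul_one]
  have hdiag' : ∑ i, ∑ j, p i * p j * D j j = ∑ i, p i * D i i := by
    rw [Finset.sum_comm, ← hdiag]
    simp only [mul_comm, mul_left_comm]
  have hswap : ∑ i, ∑ j, p i * p j * D j i = ∑ i, ∑ j, p i * p j * D i j := by
    rw [Finset.sum_comm]
    simp only [mul_comm, mul_left_comm]
  have hleft : ∑ i, p i * (D i i - ∑ j, p j * D i j) =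
      ∑ i, p i * D i i - ∑ i, ∑ j, p i * p j * D i j := by
    simp only [mul_sub, Finset.sum_sub_distrib, Finset.mul_sum, mul_assoc]
  rw [hleft]
  simp only [mul_add, mul_sub, Finset.sum_add_distrib, Finset.sum_sub_distrib, hdiag,
    hdiag', hswap]
  ring

lemma sum_fderiv_softmax_nonpos [Nonempty ι] (D : ι → ι → ℝ)
    (hD : ∀ i j, D i i + D j j - D i j - D j i ≤ 0) (x : ι → ℝ) :
    ∑ i, fderiv ℝ (fun x ↦ softmax x i) x (D i) ≤ 0 := by
  have hpairs : ∑ i, ∑ j, softmax x i * softmax x j * (D i i + D j j - D i j - D j i) ≤ 0 :=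
    Finset.sum_nonpos fun i _ ↦ Finset.sum_nonpos fun j _ ↦ mul_nonpos_of_nonneg_of_nonpos
      (mul_nonneg (softmax_nonneg x i) (softmax_nonneg x j)) (hD i j)
  rw [← two_mul_sum_mul_sub_sum_mul (sum_softmax x)] at hpairs
  simp only [(hasFDerivAt_softmax _ x).fderiv, smul_apply, sub_apply,
    ContinuousLinearMap.proj_apply, softmaxMean_apply, smul_eq_mul]
  linarith

end LogSumExp

section SmoothMaximum

variable {Ω ι : Type*} [MeasurableSpace Ω] [Nonempty ι] {P : Measure Ω}
  {X Y : Ω → ι → ℝ}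

lemma integral_logSumExp_le_of_indepFun [Fintype ι] (hX : HasGaussianLaw X P)
    (hY : HasGaussianLaw Y P) (hXY : IndepFun X Y P) (hmean : ∀ i, ∫ ω, X ω i ∂P = ∫ ω, Y ω i ∂P)
    (hvar : ∀ i j, Var[fun ω ↦ Y ω i - Y ω j; P] ≤ Var[fun ω ↦ X ω i - X ω j; P]) :
    ∫ ω, logSumExp (Y ω) ∂P ≤ ∫ ω, logSumExp (X ω) ∂P := by
  have hP := hX.isProbabilityMeasure
  refine integral_comp_le_of_indepFun hX hY hXY hmean lipschitzWith_logSumExp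
    hasFDerivAt_logSumExp lipschitzWith_softmax
    (fun i x ↦ (hasFDerivAt_softmax i x).differentiableAt)
    (sum_fderiv_softmax_nonpos _ fun i j ↦ ?_)
  have hXi := hX.memLp_two.eval
  have hYi := hY.memLp_two.eval
  have hij := hvar i j
  rw [variance_fun_sub (hXi i) (hXi j), variance_fun_sub (hYi i) (hYi j)] at hij
  rw [covariance_self (hXi i).aemeasurable, covariance_self (hXi j).aemeasurable,
    covariance_self (hYi i).aemeasurable, covariance_self (hYi j).aemeasurable,
    covariance_comm (fun ω ↦ X ω j), covariance_comm (fun ω ↦ Y ω j)]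
  linarith

lemma integral_iSup_le_add_log_card_of_indepFun [Fintype ι] (hX : HasGaussianLaw X P)
    (hY : HasGaussianLaw Y P) (hXY : IndepFun X Y P) (hmean : ∀ i, ∫ ω, X ω i ∂P = ∫ ω, Y ω i ∂P)
    (hvar : ∀ i j, Var[fun ω ↦ Y ω i - Y ω j; P] ≤ Var[fun ω ↦ X ω i - X ω j; P]) :
    ∫ ω, ⨆ i, Y ω i ∂P ≤ ∫ ω, ⨆ i, X ω i ∂P + Real.log (Fintype.card ι) := by
  have hP := hX.isProbabilityMeasure
  have hint {Z : Ω → ι → ℝ} (hZ : HasGaussianLaw Z P) {F : (ι → ℝ) → ℝ} {K : ℝ≥0}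
      (hF : LipschitzWith K F) : Integrable (fun ω ↦ F (Z ω)) P :=
    (memLp_comp_of_lipschitzWith hZ.memLp_two hF).integrable one_le_two
  calc ∫ ω, ⨆ i, Y ω i ∂P ≤ ∫ ω, logSumExp (Y ω) ∂P :=
        integral_mono (hint hY lipschitzWith_iSup) (hint hY lipschitzWith_logSumExp)
          fun ω ↦ iSup_le_logSumExp (Y ω)
    _ ≤ ∫ ω, logSumExp (X ω) ∂P := integral_logSumExp_le_of_indepFun hX hY hXY hmean hvar
    _ ≤ ∫ ω, (⨆ i, X ω i) + Real.log (Fintype.card ι) ∂P :=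
        integral_mono (hint hX lipschitzWith_logSumExp)
          ((hint hX lipschitzWith_iSup).add (integrable_const _))
          fun ω ↦ logSumExp_le_iSup_add (X ω)
    _ = ∫ ω, ⨆ i, X ω i ∂P + Real.log (Fintype.card ι) := by
        rw [integral_add (hint hX lipschitzWith_iSup) (integrable_const _)]
        simp

lemma integral_iSup_le_of_indepFun [Finite ι] (hX : HasGaussianLaw X P)
    (hY : HasGaussianLaw Y P) (hXY : IndepFun X Y P) (hmean : ∀ i, ∫ ω, X ω i ∂P = ∫ ω, Y ω i ∂P)
    (hvar : ∀ i j, Var[fun ω ↦ Y ω i - Y ω j; P] ≤ Var[fun ω ↦ X ω i - X ω j; P]) :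
    ∫ ω, ⨆ i, Y ω i ∂P ≤ ∫ ω, ⨆ i, X ω i ∂P := by
  have := Fintype.ofFinite ι
  have hiSup (b : ℝ) (hb : 0 < b) (Z : Ω → ι → ℝ) :
      ∫ ω, ⨆ i, (b • Z ω) i ∂P = b * ∫ ω, ⨆ i, Z ω i ∂P := by
    simp only [Pi.smul_apply, smul_eq_mul, ← Real.mul_iSup_of_nonneg hb.le, integral_const_mul]
  have hscaled (b : ℝ) (hb : 0 < b) :
      ∫ ω, ⨆ i, Y ω i ∂P ≤ ∫ ω, ⨆ i, X ω i ∂P + Real.log (Fintype.card ι) / b := by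
    have h := integral_iSup_le_add_log_card_of_indepFun (hX.fun_smul b) (hY.fun_smul b)
      (hXY.comp (measurable_const_smul b) (measurable_const_smul b))
      (fun i ↦ by simp [integral_const_mul, hmean i])
      (fun i j ↦ by
        simp only [Pi.smul_apply, smul_eq_mul, ← mul_sub, variance_const_mul]
        exact mul_le_mul_of_nonneg_left (hvar i j) (sq_nonneg b))
    rw [hiSup b hb, hiSup b hb] at h
    rw [← mul_le_mul_iff_right₀ hb, mul_add, mul_div_cancel₀ _ hb.ne']
    exact h
  have hlim : Filter.Tendsto
      (fun b : ℝ ↦ ∫ ω, ⨆ i, X ω i ∂P + Real.log (Fintype.card ι) / b) Filter.atTop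
      (nhds (∫ ω, ⨆ i, X ω i ∂P)) := by
    simpa using (tendsto_const_nhds.div_atTop Filter.tendsto_id).const_add (∫ ω, ⨆ i, X ω i ∂P)
  exact ge_of_tendsto hlim ((Filter.eventually_gt_atTop 0).mono hscaled)

end SmoothMaximum

section SudakovFernique

variable {Ω Ω' ι : Type*} [MeasurableSpace Ω] [MeasurableSpace Ω'] [Finite ι] [Nonempty ι]
  {P : Measure Ω} {P' : Measure Ω'} {X : Ω → ι → ℝ} {Y : Ω' → ι → ℝ}

lemma integral_iSup_le_of_variance_sub_le (hX : HasGaussianLaw X P) (hY : HasGaussianLaw Y P')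
    (hmean : ∀ i, ∫ ω, X ω i ∂P = ∫ ω, Y ω i ∂P')
    (hvar : ∀ i j, Var[fun ω ↦ Y ω i - Y ω j; P'] ≤ Var[fun ω ↦ X ω i - X ω j; P]) :
    ∫ ω, ⨆ i, Y ω i ∂P' ≤ ∫ ω, ⨆ i, X ω i ∂P := by
  have := Fintype.ofFinite ι
  have hP := hX.isProbabilityMeasure
  have hP' := hY.isProbabilityMeasure
  have hXij (i j : ι) : AEMeasurable (fun ω ↦ X ω i - X ω j) P :=
    (hX.aemeasurable.eval i).sub (hX.aemeasurable.eval j)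
  have hYij (i j : ι) : AEMeasurable (fun ω ↦ Y ω i - Y ω j) P' :=
    (hY.aemeasurable.eval i).sub (hY.aemeasurable.eval j)
  have h := integral_iSup_le_of_indepFun (P := P.prod P')
    (hasGaussianLaw_comp_of_measurePreserving hX measurePreserving_fst)
    (hasGaussianLaw_comp_of_measurePreserving hY measurePreserving_snd)
    (indepFun_prod₀ hX.aemeasurable hY.aemeasurable)
    (fun i ↦ by
      simpa [integral_fun_fst fun ω ↦ X ω i, integral_fun_snd fun ω ↦ Y ω i] using hmean i)
    (fun i j ↦ by
      rw [measurePreserving_fst.variance_fun_comp (hXij i j),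
        measurePreserving_snd.variance_fun_comp (hYij i j)]
      exact hvar i j)
  simpa [integral_fun_fst fun ω ↦ ⨆ i, X ω i, integral_fun_snd fun ω ↦ ⨆ i, Y ω i] using h

theorem stmt_17_general (hX : HasGaussianLaw X P) (hY : HasGaussianLaw Y P')
    (hmean : ∀ i, ∫ ω, X ω i ∂P = ∫ ω, Y ω i ∂P')
    (hcomp : ∀ i j, i ≠ j → ∫ ω, (Y ω i - Y ω j) ^ 2 ∂P' ≤ ∫ ω, (X ω i - X ω j) ^ 2 ∂P) :
    ∫ ω, ⨆ i, Y ω i ∂P' ≤ ∫ ω, ⨆ i, X ω i ∂P := by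
  have := Fintype.ofFinite ι
  have hP := hX.isProbabilityMeasure
  have hP' := hY.isProbabilityMeasure
  refine integral_iSup_le_of_variance_sub_le hX hY hmean fun i j ↦ ?_
  have hsq : ∫ ω, (Y ω i - Y ω j) ^ 2 ∂P' ≤ ∫ ω, (X ω i - X ω j) ^ 2 ∂P := by
    rcases eq_or_ne i j with rfl | hij
    · simp
    · exact hcomp i j hij
  have hXij : MemLp (fun ω ↦ X ω i - X ω j) 2 P :=
    (hX.memLp_two.eval i).sub (hX.memLp_two.eval j)
  have hYij : MemLp (fun ω ↦ Y ω i - Y ω j) 2 P' :=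
    (hY.memLp_two.eval i).sub (hY.memLp_two.eval j)
  rw [variance_eq_sub hXij, variance_eq_sub hYij,
    integral_sub (hX.integrable.eval i) (hX.integrable.eval j),
    integral_sub (hY.integrable.eval i) (hY.integrable.eval j), hmean, hmean]
  exact sub_le_sub_right hsq _

end SudakovFernique

theorem stmt_17 {Ω : Type*} [MeasurableSpace Ω] (μ : Measure Ω) [IsProbabilityMeasure μ]
    (n : ℕ) (hn : 0 < n) (B₁ B₂ : Ω → Fin n → ℝ)
    (hmeas₁ : Measurable B₁) (hmeas₂ : Measurable B₂)
    -- centered Gaussian vectors: every linear combination is centered Gaussian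
    (hgauss₁ : ∀ a : Fin n → ℝ, ∃ v : NNReal,
      Measure.map (fun ω => ∑ i, a i * B₁ ω i) μ = gaussianReal 0 v)
    (hgauss₂ : ∀ a : Fin n → ℝ, ∃ v : NNReal,
      Measure.map (fun ω => ∑ i, a i * B₂ ω i) μ = gaussianReal 0 v)
    (hcomp : ∀ i j : Fin n, i ≠ j →
      ∫ ω, (B₂ ω i - B₂ ω j) ^ 2 ∂μ ≤ ∫ ω, (B₁ ω i - B₁ ω j) ^ 2 ∂μ) :
    ∫ ω, (⨆ i : Fin n, B₂ ω i) ∂μ ≤ ∫ ω, (⨆ i : Fin n, B₁ ω i) ∂μ := by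
  have : Nonempty (Fin n) := ⟨⟨0, hn⟩⟩
  have hlaw₁ := hasGaussianLaw_of_map_sum_mul_eq hmeas₁.aemeasurable fun a ↦ ⟨0, hgauss₁ a⟩
  have hlaw₂ := hasGaussianLaw_of_map_sum_mul_eq hmeas₂.aemeasurable fun a ↦ ⟨0, hgauss₂ a⟩
  have hmean (i : Fin n) : ∫ ω, B₁ ω i ∂μ = ∫ ω, B₂ ω i ∂μ := by
    rw [integral_eval_eq_zero hmeas₁.aemeasurable hgauss₁,
      integral_eval_eq_zero hmeas₂.aemeasurable hgauss₂]
  exact stmt_17_general hlaw₁ hlaw₂ hmean hcomp
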